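/- For every w ≥ 0, the point (p*, q*) given by p* = 1 if w ≥ 1 and p* = 0 otherwise, and q* = 1 if w ≤ 2/3 and q* = 0 otherwise, is a minimizer of the scalarized objective -R(p,q) + w·C(p,q) over (p,q) ∈ [0,1] × [0,1]. -/

import Mathlib

open Classical

/-- Expected reward of the policy taking the left action at state `A` with
probability `p` and at state `B` with probability `q`. -/
noncomputable def Rfun (p q : ℝ) : ℝ := (1/2) * (10*p + 20*(1-p)) + (1/2) * (20*q)

/-- Expected cumulative cost of the policy taking the left action at state `A`
with probability `p` and at state `B` with probability `q`. -/
noncomputable def Cfun (p q : ℝ) : ℝ := (1/2) * (10*p + 20*(1-p)) + (1/2) * (30*q)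

section

variable {α : Type*} {P : Prop} [Decidable P] {a b : α}

theorem ite_mem_Icc [Preorder α] (hab : a ≤ b) : (if P then b else a) ∈ Set.Icc a b :=
  ite_mem.2 ⟨fun _ ↦ Set.right_mem_Icc.2 hab, fun _ ↦ Set.left_mem_Icc.2 hab⟩

theorem isMinOn_const_mul_Icc_ite [Ring α] [PartialOrder α] [IsOrderedRing α] {c : α}
    (hc_nonpos : P → c ≤ 0) (hc_nonneg : ¬P → 0 ≤ c) :
    IsMinOn (c * ·) (Set.Icc a b) (if P then b else a) := by
  refine isMinOn_iff.2 fun x hx ↦ ?_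
  split_ifs with hP
  · exact mul_le_mul_of_nonpos_left hx.2 (hc_nonpos hP)
  · exact mul_le_mul_of_nonneg_left hx.1 (hc_nonneg hP)

end

/-- The thresholds `1` and `2 / 3` for `w` are the zeros of the slopes in `p` and in `q`. -/
theorem neg_Rfun_add_mul_Cfun (w p q : ℝ) :
    -Rfun p q + w * Cfun p q = 10 * (w - 1) + 5 * (1 - w) * p + 5 * (3 * w - 2) * q := by
  unfold Rfun Cfun
  ring

theorem scalarized_minimizer_general (w : ℝ) :
    (if 1 ≤ w then (1 : ℝ) else 0) ∈ Set.Icc (0 : ℝ) 1 ∧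
    (if w ≤ 2/3 then (1 : ℝ) else 0) ∈ Set.Icc (0 : ℝ) 1 ∧
    ∀ p ∈ Set.Icc (0 : ℝ) 1, ∀ q ∈ Set.Icc (0 : ℝ) 1,
      -Rfun (if 1 ≤ w then 1 else 0) (if w ≤ 2/3 then 1 else 0)
          + w * Cfun (if 1 ≤ w then 1 else 0) (if w ≤ 2/3 then 1 else 0)
        ≤ -Rfun p q + w * Cfun p q := by
  refine ⟨ite_mem_Icc zero_le_one, ite_mem_Icc zero_le_one, fun p hp q hq ↦ ?_⟩
  have min_p : 5 * (1 - w) * (if 1 ≤ w then 1 else 0) ≤ 5 * (1 - w) * p :=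
    isMinOn_iff.1 (isMinOn_const_mul_Icc_ite (by intro; linarith) (by intro; linarith)) p hp
  have min_q : 5 * (3 * w - 2) * (if w ≤ 2/3 then 1 else 0) ≤ 5 * (3 * w - 2) * q :=
    isMinOn_iff.1 (isMinOn_const_mul_Icc_ite (by intro; linarith) (by intro; linarith)) q hq
  simp only [neg_Rfun_add_mul_Cfun]
  gcongr _ + ?_ + ?_

/-- For every `w ≥ 0`, the point `(p*, q*)` with `p* = 1` if `w ≥ 1` (else `0`)
and `q* = 1` if `w ≤ 2/3` (else `0`) minimizes the scalarized objective
`-R + w * C` over `[0,1] × [0,1]`. -/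
theorem scalarized_minimizer (w : ℝ) (hw : 0 ≤ w) :
    (if 1 ≤ w then (1 : ℝ) else 0) ∈ Set.Icc (0 : ℝ) 1 ∧
    (if w ≤ 2/3 then (1 : ℝ) else 0) ∈ Set.Icc (0 : ℝ) 1 ∧
    ∀ p ∈ Set.Icc (0 : ℝ) 1, ∀ q ∈ Set.Icc (0 : ℝ) 1,
      -Rfun (if 1 ≤ w then 1 else 0) (if w ≤ 2/3 then 1 else 0)
          + w * Cfun (if 1 ≤ w then 1 else 0) (if w ≤ 2/3 then 1 else 0)
        ≤ -Rfun p q + w * Cfun p q :=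
  scalarized_minimizer_general w
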